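/- Let M = ⊕_{j=1}^m I_j e_j be a strongly stable submodule of S^m whose set of corners is {(k_1,ℓ_1),…,(k_r,ℓ_r)} (1 ≤ r ≤ n−1), the corner (k_i,ℓ_i) having value a_i. Then there exists a strongly stable submodule M̃ = ⊕_{j=1}^m Ĩ_j e_j of S^m such that: (i) the set of corners of M̃ equals the set of corners of M; (ii) for each i, the corner (k_i,ℓ_i) of M̃ has value a_i; and (iii) for every j such that some corner of the ideal Ĩ_j is a corner of M̃, every corner of Ĩ_j is a corner of M̃. -/

import Mathlib

namespace ExtremalBetti

/-- A monomial of `K[x_1,…,x_n]`, identified with its exponent vector in `ℕ^n`. -/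
abbrev Mon (n : ℕ) := Fin n → ℕ

/-- The degree of a monomial. -/
def degree {n : ℕ} (u : Mon n) : ℕ := ∑ i, u i

/-- `m(u)`: the (1-based) index of the largest variable dividing `u`; `m(1) = 0`. -/
def maxVar {n : ℕ} (u : Mon n) : ℕ :=
  (Finset.univ.filter (fun i : Fin n => u i ≠ 0)).sup (fun i => (i : ℕ) + 1)

/-- The exponent vector of the variable `x_q` (1-based index `q`). -/
def X (n q : ℕ) : Mon n := fun i => if (i : ℕ) + 1 = q then 1 else 0

/-- `lexLT u v` : `v` is strictly lex-greater than `u` (lex order induced by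
`x_1 > x_2 > … > x_n`). -/
def lexLT {n : ℕ} (u v : Mon n) : Prop :=
  ∃ i : Fin n, (∀ j : Fin n, j < i → u j = v j) ∧ u i < v i

/-- `lexLE u v` : `v ≥_lex u`. -/
def lexLE {n : ℕ} (u v : Mon n) : Prop := u = v ∨ lexLT u v

/-- `L(top, bot)` in degree `d`: monomials `z` of degree `d` with `top ≥_lex z ≥_lex bot`. -/
def Lset {n : ℕ} (d : ℕ) (top bot : Mon n) : Set (Mon n) :=
  {z | degree z = d ∧ lexLE z top ∧ lexLE bot z}

/-- `A(k,d)`: monomials of degree `d` with `m(u) = k+1`. -/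
def A (n k d : ℕ) : Set (Mon n) := {u | degree u = d ∧ maxVar u = k + 1}

/-- The shadow of a set of monomials. -/
def shad {n : ℕ} (Ms : Set (Mon n)) : Set (Mon n) :=
  {z | ∃ u ∈ Ms, ∃ i : Fin n, z = u + Pi.single i 1}

/-- The `t`-fold iterated shadow. -/
def shadIter {n : ℕ} : ℕ → Set (Mon n) → Set (Mon n)
  | 0, Ms => Ms
  | t + 1, Ms => shad (shadIter t Ms)

/-- The lexicographic shadow `LexShad^t(𝔐) = L(x_1^{d+t}, w x_n^t)`, where `w` is the
lex-smallest element of `𝔐` (empty if `𝔐` is empty or has no lex-smallest element). -/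
def lexShad {n : ℕ} (t : ℕ) (Ms : Set (Mon n)) : Set (Mon n) :=
  {z | ∃ w ∈ Ms, (∀ v ∈ Ms, lexLE w v) ∧
      z ∈ Lset (degree w + t) ((degree w + t) • X n 1) (w + t • X n n)}

/-- A set of monomials is a monomial ideal iff it is upward closed under divisibility. -/
def IsMonIdeal {n : ℕ} (I : Set (Mon n)) : Prop :=
  ∀ u ∈ I, ∀ v : Mon n, (∀ i, u i ≤ v i) → v ∈ I

/-- `G(I)`: the minimal monomial generators of `I`. -/
def minGens {n : ℕ} (I : Set (Mon n)) : Set (Mon n) :=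
  {u ∈ I | ∀ v ∈ I, (∀ i, v i ≤ u i) → v = u}

/-- `G(I)_d`: the minimal generators of degree `d`. -/
def gens {n : ℕ} (I : Set (Mon n)) (d : ℕ) : Set (Mon n) :=
  {u ∈ minGens I | degree u = d}

/-- `I` is a strongly stable (monomial) ideal with `I ⊊ S` (i.e. `1 ∉ I`):
for every minimal generator `u`, every `i` with `x_i ∣ u` and every `j < i`,
`(x_j u)/x_i ∈ I`. -/
def StronglyStable {n : ℕ} (I : Set (Mon n)) : Prop :=
  IsMonIdeal I ∧ (0 : Mon n) ∉ I ∧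
    ∀ u ∈ minGens I, ∀ i : Fin n, u i ≠ 0 →
      ∀ j : Fin n, j < i → (u - Pi.single i 1 + Pi.single j 1) ∈ I

/-- The initial degree `α(I)` of the monomial ideal `I` equals `d`. -/
def initialDegree {n : ℕ} (I : Set (Mon n)) (d : ℕ) : Prop :=
  (∃ u ∈ I, degree u = d) ∧ ∀ u ∈ I, d ≤ degree u

/-- `(k,ℓ)` is a corner of `I`: `k, ℓ ≥ 1`, `k + 1 = max{m(u) : u ∈ G(I)_ℓ}`, and
`m(u) ≤ k` for every `u ∈ G(I)_j` with `j > ℓ`. -/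
def IsCorner {n : ℕ} (I : Set (Mon n)) (k ℓ : ℕ) : Prop :=
  1 ≤ k ∧ 1 ≤ ℓ ∧
  (∃ u ∈ gens I ℓ, maxVar u = k + 1) ∧
  (∀ u ∈ gens I ℓ, maxVar u ≤ k + 1) ∧
  (∀ j, ℓ < j → ∀ u ∈ gens I j, maxVar u ≤ k)

/-- The value of the corner `(k,ℓ)`: `|{u ∈ G(I)_ℓ : m(u) = k+1}|`. -/
noncomputable def cornerValue {n : ℕ} (I : Set (Mon n)) (k ℓ : ℕ) : ℕ :=
  {u ∈ gens I ℓ | maxVar u = k + 1}.ncard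

/-- The set of corners of `I`. -/
def corners {n : ℕ} (I : Set (Mon n)) : Set (ℕ × ℕ) :=
  {c | IsCorner I c.1 c.2}

/-- `(k,ℓ)` is a corner of the submodule `M = ⊕_j I_j e_j` of `S^m`. -/
def IsCornerMod {n m : ℕ} (I : Fin m → Set (Mon n)) (k ℓ : ℕ) : Prop :=
  1 ≤ k ∧ 1 ≤ ℓ ∧
  (∃ j, ∃ u ∈ gens (I j) ℓ, maxVar u = k + 1) ∧
  (∀ j, ∀ u ∈ gens (I j) ℓ, maxVar u ≤ k + 1) ∧
  (∀ d, ℓ < d → ∀ j, ∀ u ∈ gens (I j) d, maxVar u ≤ k)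

/-- The value of the corner `(k,ℓ)` of `M = ⊕_j I_j e_j`: the number of minimal
generators `u e_j` with `deg u = ℓ` and `m(u) = k+1`. -/
noncomputable def cornerValueMod {n m : ℕ} (I : Fin m → Set (Mon n)) (k ℓ : ℕ) : ℕ :=
  {p : Mon n × Fin m | p.1 ∈ gens (I p.2) ℓ ∧ maxVar p.1 = k + 1}.ncard

/-- The set of corners of the submodule `M = ⊕_j I_j e_j`. -/
def cornersMod {n m : ℕ} (I : Fin m → Set (Mon n)) : Set (ℕ × ℕ) :=
  {c | IsCornerMod I c.1 c.2}

/-- `t = max{p : λ_p ≤ s − p}` (and `t = 0` if no such `p` exists). -/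
def tVal (s : ℕ) (l : ℕ → ℕ) : ℕ :=
  ((Finset.Icc 1 s).filter (fun p => l p ≤ s - p)).sup id

/-- The associated sets `B_1, …, B_s` of the corner sequence
`(κ_1,λ_1), …, (κ_s,λ_s)` (given by `k, l : ℕ → ℕ` on indices `1,…,s`);
`B_0 = ∅`. -/
def assocB (n s : ℕ) (k l : ℕ → ℕ) (p : ℕ) : Set (Mon n) :=
  if p = 0 then ∅
  else if s = 1 then A n (k 1) (l 1)
  else if p = s then {u ∈ A n (k s) (l s) | lexLE ((l s) • X n (k s + 1)) u}
  else if l 1 = 2 ∧ p = 1 then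
    {u ∈ A n (k 1) 2 |
      lexLE (X n (if s = 2 then k 2 else k s - 1) + X n (k 1 + 1)) u}
  else if p ≤ tVal s l then
    {u ∈ A n (k p) (l p) |
      lexLE ((∑ j ∈ Finset.Icc (s - l p + 3) s, X n (k j)) +
          X n (k (s - l p + 2) - 1) + X n (k p + 1)) u}
  else
    {u ∈ A n (k p) (l p) |
      lexLE ((∑ j ∈ Finset.Icc (p + 1) s, X n (k j)) +
          (l p - (s - p)) • X n (k p + 1)) u}

/-- The admissible bound `b_p = |B_p \ LexShad^{λ_p−λ_{p−1}}(B_{p−1})|` of the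
`p`-th pair of the corner sequence. -/
noncomputable def admissibleBound (n s : ℕ) (k l : ℕ → ℕ) (p : ℕ) : ℕ :=
  (assocB n s k l p \ lexShad (l p - l (p - 1)) (assocB n s k l (p - 1))).ncard

/-!
Let `T` be a set of corners of a strongly stable ideal `I`, and let `D` be the set of monomials `u`
with `m(u) ≤ k + 1` and `deg u ≤ ℓ` for some `(k, ℓ) ∈ T`. As `D` is closed under divisors and under
the exchanges `u ↦ x_j u / x_i` (`j < i`), the ideal generated by `I ∩ D` is again strongly stable,
and its minimal generators are those of `I` lying in `D`. Each of its corners lies below one in `T`,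
and all of `T` consists of corners of it; since the corners of an ideal form an antichain, its set
of corners is `T`. Apply this to every `I_j`, with `T` the set of corners of `I_j` that are corners
of `M`: no generator counted by a corner of `M` is lost.
-/

section Order

theorem minimal_mem_upperClosure_iff {α : Type*} [PartialOrder α] {s : Set α} {x : α} :
    Minimal (· ∈ upperClosure s) x ↔ Minimal (· ∈ s) x :=
  minimal_iff_minimal_of_imp_of_forall (fun _ hx => subset_upperClosure hx) fun _ hx =>
    let ⟨y, hy, hyx⟩ := hx
    ⟨y, hyx, hy⟩

theorem minimal_mem_inter_iff_of_isLowerSet {α : Type*} [Preorder α] {s t : Set α} {x : α}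
    (ht : IsLowerSet t) : Minimal (· ∈ s ∩ t) x ↔ Minimal (· ∈ s) x ∧ x ∈ t :=
  ⟨fun h => ⟨⟨h.prop.1, fun _ hy hyx => h.le_of_le ⟨hy, ht hyx h.prop.2⟩ hyx⟩, h.prop.2⟩,
    fun h => h.1.and_right h.2⟩

end Order

section Monomials

variable {n : ℕ}

theorem degree_mono : Monotone (degree : Mon n → ℕ) :=
  fun _ _ h => Finset.sum_le_sum fun i _ => h i

theorem degree_add (u v : Mon n) : degree (u + v) = degree u + degree v :=
  Finset.sum_add_distrib

theorem degree_single (i : Fin n) : degree (Pi.single i 1 : Mon n) = 1 :=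
  Fintype.sum_pi_single' i 1

theorem degree_exchange {u : Mon n} {i : Fin n} (hi : u i ≠ 0) (j : Fin n) :
    degree (u - Pi.single i 1 + Pi.single j 1) = degree u := by
  have single_le : (Pi.single i 1 : Mon n) ≤ u :=
    update_le_iff.2 ⟨Nat.one_le_iff_ne_zero.2 hi, fun _ _ => Nat.zero_le _⟩
  calc degree (u - Pi.single i 1 + Pi.single j 1)
      = degree (u - Pi.single i 1 + Pi.single i 1) := by simp only [degree_add, degree_single]
    _ = degree u := by rw [tsub_add_cancel_of_le single_le]

theorem maxVar_le_iff {u : Mon n} {b : ℕ} :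
    maxVar u ≤ b ↔ ∀ i : Fin n, u i ≠ 0 → (i : ℕ) + 1 ≤ b := by
  simp only [maxVar, Finset.sup_le_iff, Finset.mem_filter_univ]

theorem succ_le_maxVar {u : Mon n} {i : Fin n} (hi : u i ≠ 0) : (i : ℕ) + 1 ≤ maxVar u :=
  maxVar_le_iff.1 le_rfl i hi

theorem maxVar_mono : Monotone (maxVar : Mon n → ℕ) := fun _ _ h =>
  maxVar_le_iff.2 fun i hi => succ_le_maxVar ((Nat.pos_of_ne_zero hi).trans_le (h i)).ne'

theorem maxVar_exchange_le {u : Mon n} {i j : Fin n} (hi : u i ≠ 0) (hj : j < i) :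
    maxVar (u - Pi.single i 1 + Pi.single j 1) ≤ maxVar u := by
  refine maxVar_le_iff.2 fun q hq => ?_
  obtain rfl | hqj := eq_or_ne q j
  · exact (Nat.succ_le_succ hj.le).trans (succ_le_maxVar hi)
  · refine succ_le_maxVar fun hq0 => hq ?_
    simp [hq0, hqj]

end Monomials

section SubidealIn

/-- A set of monomials closed under the exchanges `u ↦ x_j u / x_i` with `x_i ∣ u` and `j < i`;
unlike in `StronglyStable`, every element is tested and no ideal is involved. -/
def ExchangeClosed {n : ℕ} (D : Set (Mon n)) : Prop :=
  ∀ ⦃u⦄, u ∈ D → ∀ ⦃i j : Fin n⦄, u i ≠ 0 → j < i → u - Pi.single i 1 + Pi.single j 1 ∈ D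

/-- The monomial ideal generated by the monomials of `I` that lie in `D`. -/
def subidealIn {n : ℕ} (I D : Set (Mon n)) : Set (Mon n) :=
  upperClosure (I ∩ D)

variable {n : ℕ} {I D : Set (Mon n)} {u : Mon n}

theorem mem_minGens_iff_minimal : u ∈ minGens I ↔ Minimal (· ∈ I) u := by
  rw [minimal_mem_iff]
  exact and_congr_right fun _ => forall₃_congr fun _ _ _ => eq_comm

theorem mem_minGens_subidealIn (hD : IsLowerSet D) :
    u ∈ minGens (subidealIn I D) ↔ u ∈ minGens I ∧ u ∈ D := by
  simp only [mem_minGens_iff_minimal]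
  exact minimal_mem_upperClosure_iff.trans (minimal_mem_inter_iff_of_isLowerSet hD)

theorem mem_gens_subidealIn (hD : IsLowerSet D) {d : ℕ} :
    u ∈ gens (subidealIn I D) d ↔ u ∈ gens I d ∧ u ∈ D :=
  (and_congr_left fun _ => mem_minGens_subidealIn hD).trans and_right_comm

theorem gens_subidealIn_subset (hD : IsLowerSet D) (d : ℕ) :
    gens (subidealIn I D) d ⊆ gens I d :=
  fun _ hu => ((mem_gens_subidealIn hD).1 hu).1

theorem StronglyStable.subidealIn (hI : StronglyStable I) (hD : IsLowerSet D)
    (hex : ExchangeClosed D) : StronglyStable (subidealIn I D) := by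
  obtain ⟨-, one_notMem, exchange_mem⟩ := hI
  refine ⟨fun u hu v huv => (upperClosure (I ∩ D)).upper huv hu, ?_, fun u hu i hi j hj => ?_⟩
  · rintro ⟨v, hv, hv0⟩
    exact one_notMem (nonpos_iff_eq_zero.1 hv0 ▸ hv.1)
  · obtain ⟨huI, huD⟩ := (mem_minGens_subidealIn hD).1 hu
    exact subset_upperClosure ⟨exchange_mem u huI i hi j hj, hex huD hi hj⟩

end SubidealIn

section CornerRegion

/-- The monomials `u` lying below one of the positions `(k, ℓ) ∈ T`, in the sense that
`m(u) ≤ k + 1` and `deg u ≤ ℓ`. -/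
def cornerRegion (n : ℕ) (T : Set (ℕ × ℕ)) : Set (Mon n) :=
  {u | ∃ c ∈ T, maxVar u ≤ c.1 + 1 ∧ degree u ≤ c.2}

variable {n : ℕ} {I : Set (Mon n)} {T : Set (ℕ × ℕ)}

theorem isLowerSet_cornerRegion : IsLowerSet (cornerRegion n T) :=
  fun _ _ hvu ⟨c, hc, hm, hd⟩ => ⟨c, hc, (maxVar_mono hvu).trans hm, (degree_mono hvu).trans hd⟩

theorem exchangeClosed_cornerRegion : ExchangeClosed (cornerRegion n T) :=
  fun _ ⟨c, hc, hm, hd⟩ _ j hi hj =>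
    ⟨c, hc, (maxVar_exchange_le hi hj).trans hm, (degree_exchange hi j).trans_le hd⟩

theorem mem_gens_subidealIn_cornerRegion {c : ℕ × ℕ} (hc : c ∈ T) {u : Mon n}
    (hu : maxVar u ≤ c.1 + 1) :
    u ∈ gens (subidealIn I (cornerRegion n T)) c.2 ↔ u ∈ gens I c.2 :=
  (mem_gens_subidealIn isLowerSet_cornerRegion).trans <|
    and_iff_left_of_imp fun h => ⟨c, hc, hu, h.2.le⟩

theorem isAntichain_corners (I : Set (Mon n)) : IsAntichain (· ≤ ·) (corners I) := by
  rintro ⟨k, l⟩ ⟨-, -, -, hmax, hgt⟩ ⟨k', l'⟩ ⟨-, -, ⟨v, hv, hmv⟩, -⟩ hne ⟨hk, hl⟩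
  dsimp only at hmax hgt hv hmv hk hl
  obtain hlt | rfl := hl.lt_or_eq
  · have : maxVar v ≤ k := hgt l' hlt v hv
    omega
  · have : maxVar v ≤ k + 1 := hmax v hv
    exact hne (congrArg (·, l) (by omega : k = k'))

theorem corners_subidealIn_cornerRegion (hT : T ⊆ corners I) :
    corners (subidealIn I (cornerRegion n T)) = T := by
  have subset : T ⊆ corners (subidealIn I (cornerRegion n T)) := by
    intro c hc
    obtain ⟨hk, hl, ⟨u, hu, hmu⟩, hmax, hgt⟩ := hT hc
    have gens_subset := gens_subidealIn_subset (I := I) (isLowerSet_cornerRegion (T := T))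
    exact ⟨hk, hl, ⟨u, (mem_gens_subidealIn_cornerRegion hc hmu.le).2 hu, hmu⟩,
      fun v hv => hmax v (gens_subset _ hv), fun d hd v hv => hgt d hd v (gens_subset d hv)⟩
  refine Set.Subset.antisymm (fun c hc => ?_) subset
  obtain ⟨-, -, ⟨u, hu, hmu⟩, -⟩ := id hc
  obtain ⟨⟨-, hdu⟩, c', hc', hmu', hdu'⟩ := (mem_gens_subidealIn isLowerSet_cornerRegion).1 hu
  have le : c ≤ c' := ⟨Nat.succ_le_succ_iff.1 (hmu.ge.trans hmu'), hdu.ge.trans hdu'⟩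
  exact (isAntichain_corners _).eq hc (subset hc') le ▸ hc'

end CornerRegion

section Prune

/-- The submodule `M̃` of `M = ⊕_j I_j e_j` obtained by keeping, in each summand `I_j`, only the
generators lying below a corner of `I_j` that is also a corner of `M`. -/
def prune {n m : ℕ} (I : Fin m → Set (Mon n)) (j : Fin m) : Set (Mon n) :=
  subidealIn (I j) (cornerRegion n (corners (I j) ∩ cornersMod I))

variable {n m : ℕ} {I : Fin m → Set (Mon n)} {j : Fin m}

theorem StronglyStable.prune (hI : StronglyStable (I j)) : StronglyStable (prune I j) :=
  hI.subidealIn isLowerSet_cornerRegion exchangeClosed_cornerRegion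

theorem corners_prune (I : Fin m → Set (Mon n)) (j : Fin m) :
    corners (prune I j) = corners (I j) ∩ cornersMod I :=
  corners_subidealIn_cornerRegion Set.inter_subset_left

theorem mem_corners_of_mem_cornersMod {c : ℕ × ℕ} (hc : c ∈ cornersMod I) {u : Mon n}
    (hu : u ∈ gens (I j) c.2) (hmu : maxVar u = c.1 + 1) : c ∈ corners (I j) :=
  let ⟨hk, hl, _, hmax, hgt⟩ := hc
  ⟨hk, hl, ⟨u, hu, hmu⟩, hmax j, fun d hd => hgt d hd j⟩

theorem gens_prune_subset (I : Fin m → Set (Mon n)) (j : Fin m) (d : ℕ) :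
    gens (prune I j) d ⊆ gens (I j) d :=
  gens_subidealIn_subset isLowerSet_cornerRegion d

theorem mem_gens_prune_of_mem_cornersMod {c : ℕ × ℕ} (hc : c ∈ cornersMod I) {u : Mon n}
    (hmu : maxVar u = c.1 + 1) : u ∈ gens (prune I j) c.2 ↔ u ∈ gens (I j) c.2 :=
  ⟨fun hu => gens_prune_subset I j _ hu, fun hu =>
    have hcT : c ∈ corners (I j) ∩ cornersMod I := ⟨mem_corners_of_mem_cornersMod hc hu hmu, hc⟩
    (mem_gens_subidealIn_cornerRegion hcT hmu.le).2 hu⟩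

theorem cornersMod_prune (I : Fin m → Set (Mon n)) : cornersMod (prune I) = cornersMod I := by
  refine Set.Subset.antisymm (fun c hc => ?_) fun c hc => ?_
  · obtain ⟨-, -, ⟨j, u, hu, hmu⟩, -⟩ := id hc
    have : c ∈ corners (prune I j) := mem_corners_of_mem_cornersMod hc hu hmu
    exact (corners_prune I j ▸ this).2
  · obtain ⟨hk, hl, ⟨j, u, hu, hmu⟩, hmax, hgt⟩ := id hc
    exact ⟨hk, hl, ⟨j, u, (mem_gens_prune_of_mem_cornersMod hc hmu).2 hu, hmu⟩,
      fun j u hu => hmax j u (gens_prune_subset I j _ hu),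
      fun d hd j u hu => hgt d hd j u (gens_prune_subset I j d hu)⟩

theorem cornerValueMod_prune {c : ℕ × ℕ} (hc : c ∈ cornersMod I) :
    cornerValueMod (prune I) c.1 c.2 = cornerValueMod I c.1 c.2 :=
  congrArg Set.ncard <| Set.ext fun _ => and_congr_left <| mem_gens_prune_of_mem_cornersMod hc

end Prune

theorem statement13_general {n m : ℕ} (I : Fin m → Set (Mon n))
    (hSS : ∀ j, StronglyStable (I j)) :
    ∃ J : Fin m → Set (Mon n), (∀ j, StronglyStable (J j)) ∧
      cornersMod J = cornersMod I ∧
      (∀ c ∈ cornersMod J, cornerValueMod J c.1 c.2 = cornerValueMod I c.1 c.2) ∧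
      ∀ j, corners (J j) ⊆ cornersMod J := by
  refine ⟨prune I, fun j => (hSS j).prune, cornersMod_prune I, ?_, ?_⟩ <;> rw [cornersMod_prune]
  · exact fun c => cornerValueMod_prune
  · exact fun j => (corners_prune I j).trans_subset Set.inter_subset_right

/-- Let `M = ⊕_{j} I_j e_j` be a strongly stable submodule of `S^m`
whose set of corners is `{(k_1,ℓ_1),…,(k_r,ℓ_r)}` (`1 ≤ r ≤ n−1`), the corner
`(k_i,ℓ_i)` having value `a_i`. Then there is a strongly stable submodule
`M̃ = ⊕_j Ĩ_j e_j` of `S^m` with the same corners and corner values, and such that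
for every `j`, if some corner of `Ĩ_j` is a corner of `M̃` then every corner of
`Ĩ_j` is a corner of `M̃`. -/
theorem statement13 (n m r : ℕ) (hr1 : 1 ≤ r) (hr : r ≤ n - 1)
    (k l a : ℕ → ℕ)
    (hk1 : k 1 ≤ n - 1) (hkr : 1 ≤ k r) (hl1 : 1 ≤ l 1)
    (hkdec : ∀ i j, 1 ≤ i → i < j → j ≤ r → k j < k i)
    (hlinc : ∀ i j, 1 ≤ i → i < j → j ≤ r → l i < l j)
    (I : Fin m → Set (Mon n)) (hSS : ∀ j, StronglyStable (I j))
    (hcor : cornersMod I = {c | ∃ i, 1 ≤ i ∧ i ≤ r ∧ c = (k i, l i)})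
    (hval : ∀ i, 1 ≤ i → i ≤ r → cornerValueMod I (k i) (l i) = a i) :
    ∃ J : Fin m → Set (Mon n), (∀ j, StronglyStable (J j)) ∧
      cornersMod J = cornersMod I ∧
      (∀ i, 1 ≤ i → i ≤ r → cornerValueMod J (k i) (l i) = a i) ∧
      (∀ j : Fin m, (∃ c ∈ corners (J j), c ∈ cornersMod J) →
        ∀ c ∈ corners (J j), c ∈ cornersMod J) := by
  obtain ⟨J, hJ, hcorners, hvalue, hsub⟩ := statement13_general I hSS
  refine ⟨J, hJ, hcorners, fun i hi hir => ?_, fun j _ => hsub j⟩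
  have hc : (k i, l i) ∈ cornersMod J := by
    rw [hcorners, hcor]
    exact ⟨i, hi, hir, rfl⟩
  exact (hvalue _ hc).trans (hval i hi hir)

end ExtremalBetti
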